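/- arXiv:2601.02853 — 2 statements merged into one kernel-verified Lean document; each statement's English description precedes it below -/
import Mathlib

section
/- For μ > 1 set r_μ = √(2(μ−1)), and for λ > 0 define h_λ(s) = e^{−s²/4} s^λ and H_λ(s) = h_λ(s−2) + h_λ(s+2). Then for every λ > λ₀ := (28 + 11√7)/9 and every t with 0 ≤ t < r_{λ+4} − r_{λ+3}, one has (2 r_{λ+4} − t) H_λ(r_{λ+4} − t) < 2λ (2 r_{λ+2} + t) H_{λ−2}(r_{λ+2} + t). -/
open Real

/-- The argument of `cosh` when `h_l(x-2) + h_l(x+2)` is written as an exponential times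
`cosh`. -/
noncomputable def phase (l x : ℝ) : ℝ := x + l / 2 * (log (x - 2) - log (x + 2))

/-- Logarithm of `h_l(x-2) + h_l(x+2)`, up to the additive constant `log 2 - 1`. -/
noncomputable def logSum (l x : ℝ) : ℝ :=
  -x ^ 2 / 4 + l / 2 * (log (x - 2) + log (x + 2)) + log (cosh (phase l x))

theorem sum_eq_exp_logSum (l x : ℝ) (hx : 2 < x) :
    exp (-(x - 2) ^ 2 / 4) * (x - 2) ^ l + exp (-(x + 2) ^ 2 / 4) * (x + 2) ^ l
      = 2 * exp (-1) * exp (logSum l x) := by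
  rw [logSum, exp_add, exp_log (cosh_pos _), cosh_eq, phase,
    rpow_def_of_pos (by linarith), rpow_def_of_pos (by linarith)]
  have e : ∀ A B C D : ℝ, 2 * exp A * (exp B * ((exp C + exp D) / 2))
      = exp (A + B + C) + exp (A + B + D) := by
    intro A B C D
    simp only [exp_add]; ring
  rw [e, ← exp_add, ← exp_add]
  congr 2 <;> ring

theorem hasDerivAt_phase (l x : ℝ) (hx : 2 < x) :
    HasDerivAt (phase l) (1 + 2 * l / (x ^ 2 - 4)) x := by
  have h1 : x - 2 ≠ 0 := by linarith
  have h2 : x + 2 ≠ 0 := by linarith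
  have h3 : x ^ 2 - 4 ≠ 0 := by nlinarith
  have d1 := ((hasDerivAt_id x).sub_const 2).log h1
  have d2 := ((hasDerivAt_id x).add_const 2).log h2
  refine ((hasDerivAt_id x).add ((d1.sub d2).const_mul (l / 2))).congr_deriv ?_
  simp only [id]
  rw [show x ^ 2 - 4 = (x - 2) * (x + 2) by ring]
  field_simp
  ring

theorem hasDerivAt_logSum (l x : ℝ) (hx : 2 < x) :
    HasDerivAt (logSum l) (-x / 2 + l * x / (x ^ 2 - 4)
      + sinh (phase l x) / cosh (phase l x) * (1 + 2 * l / (x ^ 2 - 4))) x := by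
  have h1 : x - 2 ≠ 0 := by linarith
  have h2 : x + 2 ≠ 0 := by linarith
  have h3 : x ^ 2 - 4 ≠ 0 := by nlinarith
  have d1 := ((hasDerivAt_id x).sub_const 2).log h1
  have d2 := ((hasDerivAt_id x).add_const 2).log h2
  have d3 := (hasDerivAt_phase l x hx).cosh.log (cosh_pos _).ne'
  have d4 := ((hasDerivAt_id x).pow 2).neg.div_const 4
  refine ((d4.add ((d1.add d2).const_mul (l / 2))).add d3).congr_deriv ?_
  have e : l / 2 * (1 / (x - 2) + 1 / (x + 2)) = l * x / (x ^ 2 - 4) := by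
    rw [show x ^ 2 - 4 = (x - 2) * (x + 2) by ring]
    field_simp
    ring
  simp only [id]
  rw [e]
  push_cast
  ring

/-- The bound `artanh y ≤ y + y³ / (3 (1 - y²))` at `y = c / x`. -/
theorem log_sub_log_le (c x : ℝ) (hc : 0 < c) (hx : c < x) :
    log (x + c) - log (x - c) ≤ 2 * (c / x + c ^ 3 / (3 * x * (x ^ 2 - c ^ 2))) := by
  have hx0 : 0 < x := hc.trans hx
  set y := c / x with hy
  have hy0 : 0 < y := div_pos hc hx0
  have hy1 : y < 1 := (div_lt_one hx0).2 hx
  have hs := hasSum_log_sub_log_of_abs_lt_one (x := y) (by rwa [abs_of_pos hy0])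
  have hg := (hasSum_geometric_of_lt_one (sq_nonneg y) (by nlinarith)).mul_left (2 / 3 * y ^ 3)
  have hg' : HasSum (fun k : ℕ => 2 / 3 * y ^ 3 * (y ^ 2) ^ k)
      (2 / 3 * y ^ 3 * (1 - y ^ 2)⁻¹) := hg
  have hs1 := (hasSum_nat_add_iff' 1).2 hs
  have hle := hasSum_le (fun k : ℕ => ?_) hs1 hg'
  · have e1 : log (x + c) - log (x - c) = log (1 + y) - log (1 - y) := by
      rw [show x + c = x * (1 + y) by rw [hy]; field_simp,
        show x - c = x * (1 - y) by rw [hy]; field_simp,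
        log_mul hx0.ne' (by linarith), log_mul hx0.ne' (by linarith)]
      ring
    have e2 : 2 / 3 * y ^ 3 * (1 - y ^ 2)⁻¹ = 2 * (c ^ 3 / (3 * x * (x ^ 2 - c ^ 2))) := by
      have : x ^ 2 - c ^ 2 ≠ 0 := by nlinarith
      have h1 : 1 - y ^ 2 = (x ^ 2 - c ^ 2) / x ^ 2 := by rw [hy]; field_simp
      rw [h1, hy]
      field_simp
    rw [e2] at hle
    simp at hle
    rw [e1]
    linarith
  · have : (0 : ℝ) ≤ k := k.cast_nonneg
    have hp : 0 ≤ y ^ (2 * (k + 1) + 1) := by positivity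
    have e3 : 2 / 3 * y ^ 3 * (y ^ 2) ^ k = 2 / 3 * y ^ (2 * (k + 1) + 1) := by ring
    rw [e3]
    push_cast
    have : (1 : ℝ) / (2 * (k + 1) + 1) ≤ 1 / 3 :=
      one_div_le_one_div_of_le (by norm_num) (by linarith)
    nlinarith

theorem le_log_sub_log (x : ℝ) (hx : 2 < x) : 4 / x ≤ log (x + 2) - log (x - 2) := by
  have hx0 : 0 < x := by linarith
  set y := 2 / x with hy
  have hy0 : 0 < y := by positivity
  have hy1 : y < 1 := (div_lt_one hx0).2 hx
  have hs := hasSum_log_sub_log_of_abs_lt_one (x := y) (by rwa [abs_of_pos hy0])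
  have h := hs.summable.sum_le_tsum {0} (fun k _ => by positivity)
  rw [hs.tsum_eq] at h
  rw [show x + 2 = x * (1 + y) by rw [hy]; field_simp,
    show x - 2 = x * (1 - y) by rw [hy]; field_simp,
    log_mul hx0.ne' (by linarith), log_mul hx0.ne' (by linarith)]
  simp at h
  have : 4 / x = 2 * y := by rw [hy]; ring
  linarith

theorem le_phase (k l x : ℝ) (hx : 2 < x) (hk : 2 ≤ k) (hl : l ≤ x ^ 2 / 2 - k)
    (hxk : k ≤ x ^ 2 / 2) : (2 * k - 4 / 3) / x ≤ phase l x := by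
  have hx0 : 0 < x := by linarith
  have hx4 : 0 < x ^ 2 - 4 := by nlinarith
  have h1 := log_sub_log_le 2 x (by norm_num) hx
  have h0 := le_log_sub_log x hx
  have h00 : 0 < 4 / x := by positivity
  have h2 : l / 2 * (log (x + 2) - log (x - 2)) ≤
      (x ^ 2 / 2 - k) / 2 * (2 * (2 / x + 2 ^ 3 / (3 * x * (x ^ 2 - 2 ^ 2)))) :=
    (mul_le_mul_of_nonneg_right (by linarith) (by linarith)).trans
      (mul_le_mul_of_nonneg_left h1 (by linarith))
  have h3 : (x ^ 2 / 2 - k) / 2 * (2 * (2 / x + 2 ^ 3 / (3 * x * (x ^ 2 - 2 ^ 2))))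
      = x - (2 * k) / x + 4 / 3 / x * ((x ^ 2 - 2 * k) / (x ^ 2 - 4)) := by
    have : x ^ 2 - 2 ^ 2 ≠ 0 := by linarith
    have : x ^ 2 - 4 ≠ 0 := by linarith
    norm_num
    field_simp
    ring
  have h4 : 4 / 3 / x * ((x ^ 2 - 2 * k) / (x ^ 2 - 4)) ≤ 4 / 3 / x * 1 := by
    apply mul_le_mul_of_nonneg_left _ (by positivity)
    rw [div_le_one hx4]
    linarith
  have h5 : (2 * k - 4 / 3) / x = (2 * k) / x - 4 / 3 / x * 1 := by ring
  rw [phase, h5]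
  linarith

theorem phase_critical_lt (a b : ℝ) (hb : 2 < b) (hab : b < a) :
    phase (a ^ 2 / 2 - 3) a < phase (b ^ 2 / 2 - 3) b := by
  have key : ∀ x : ℝ, 2 < x → HasDerivAt (fun x => phase (x ^ 2 / 2 - 3) x)
      (1 + 2 * (x ^ 2 / 2 - 3) / (x ^ 2 - 4) + x / 2 * (log (x - 2) - log (x + 2))) x := by
    intro x hx
    have h1 : x - 2 ≠ 0 := by linarith
    have h2 : x + 2 ≠ 0 := by linarith
    have h3 : x ^ 2 - 4 ≠ 0 := by nlinarith
    have d1 := ((hasDerivAt_id x).sub_const 2).log h1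
    have d2 := ((hasDerivAt_id x).add_const 2).log h2
    have d3 := ((((hasDerivAt_id x).pow 2).div_const 2).sub_const 3).div_const 2
    refine ((hasDerivAt_id x).add (d3.mul (d1.sub d2))).congr_deriv ?_
    simp
    rw [show x ^ 2 - 4 = (x - 2) * (x + 2) by ring]
    field_simp
    ring
  refine strictAntiOn_of_deriv_neg (convex_Ici b)
    (fun x hx => (key x (hb.trans_le hx)).continuousAt.continuousWithinAt) ?_
    Set.self_mem_Ici (Set.mem_Ici.2 hab.le) hab
  intro x hx
  rw [interior_Ici] at hx
  have hx2 : 2 < x := hb.trans hx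
  rw [(key x hx2).deriv]
  have h4 : 0 < x ^ 2 - 4 := by nlinarith
  have h := le_log_sub_log x hx2
  have e1 : 2 * (x ^ 2 / 2 - 3) / (x ^ 2 - 4) = 1 - 2 / (x ^ 2 - 4) := by
    field_simp
    ring
  have e2 : x / 2 * (4 / x) = 2 := by field_simp; norm_num
  have e3 := mul_le_mul_of_nonneg_left h (show 0 ≤ x / 2 by linarith)
  have : 0 < 2 / (x ^ 2 - 4) := by positivity
  rw [e1]
  linarith

theorem deriv_logSum_lower (l x : ℝ) (hx : 2 < x) (h1 : 2 * l + 4 ≤ x ^ 2)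
    (h2 : x ^ 2 ≤ 2 * l + 6) (hl : 0 ≤ l) :
    -(x / (x ^ 2 - 4)) ≤ -x / 2 + l * x / (x ^ 2 - 4)
      + sinh (phase l x) / cosh (phase l x) * (1 + 2 * l / (x ^ 2 - 4)) := by
  have h4 : 0 < x ^ 2 - 4 := by nlinarith
  have hE := le_phase 2 l x hx le_rfl (by linarith) (by linarith)
  have hE0 : 0 ≤ phase l x := le_trans (div_nonneg (by norm_num) (by linarith)) hE
  have hT : 0 ≤ sinh (phase l x) / cosh (phase l x) * (1 + 2 * l / (x ^ 2 - 4)) :=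
    mul_nonneg (div_nonneg (sinh_nonneg_iff.2 hE0) (cosh_pos _).le) (by positivity)
  have e : -x / 2 + l * x / (x ^ 2 - 4) + x / (x ^ 2 - 4)
      = x * (2 * l + 6 - x ^ 2) / (2 * (x ^ 2 - 4)) := by
    field_simp
    ring
  have : 0 ≤ x * (2 * l + 6 - x ^ 2) / (2 * (x ^ 2 - 4)) :=
    div_nonneg (mul_nonneg (by linarith) (by linarith)) (by linarith)
  linarith

theorem deriv_logSum_lower' (l x : ℝ) (hx : 2 < x) (h1 : 2 * l + 6 ≤ x ^ 2)
    (h2 : x ^ 2 ≤ 2 * l + 8) (hl : 4 ≤ l) :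
    x / (x ^ 2 - 4) ≤ -x / 2 + l * x / (x ^ 2 - 4)
      + sinh (phase l x) / cosh (phase l x) * (1 + 2 * l / (x ^ 2 - 4)) := by
  have h4 : 0 < x ^ 2 - 4 := by nlinarith
  have hx0 : 0 < x := by linarith
  have hE := le_phase 3 l x hx (by norm_num) (by linarith) (by linarith)
  have hE1 : 4 / x ≤ phase l x :=
    le_trans (div_le_div_of_nonneg_right (by norm_num) hx0.le) hE
  have hS : 4 / x ≤ sinh (phase l x) :=
    hE1.trans (self_le_sinh_iff.2 (le_trans (by positivity) hE1))
  set S := sinh (phase l x)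
  set C := cosh (phase l x)
  have hCp : 0 < C := cosh_pos _
  have hCS : C ^ 2 = S ^ 2 + 1 := cosh_sq _
  have hSx : 4 ≤ S * x := (div_le_iff₀ hx0).1 hS
  have hv : 14 ≤ x ^ 2 := by linarith
  have hq : 3 * x * C ≤ S * (2 * x ^ 2 - 12) := by
    have hS0 : 0 ≤ S := le_trans (by positivity) hS
    refine le_of_sq_le_sq ?_ (mul_nonneg hS0 (by linarith))
    rw [mul_pow, mul_pow, mul_pow, hCS]
    have hv16 : 16 ≤ S ^ 2 * x ^ 2 := by nlinarith
    generalize x ^ 2 = v at hv hv16 ⊢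
    have hp : 9 * v ^ 2 / 16 ≤ (2 * v - 12) ^ 2 - 9 * v := by
      nlinarith [mul_nonneg (sub_nonneg.2 hv) (sub_nonneg.2 hv)]
    have hp1 := mul_le_mul_of_nonneg_left hp (sq_nonneg S)
    have hp2 := mul_le_mul_of_nonneg_right hv16 (show 0 ≤ 9 * v / 16 by linarith)
    linarith
  have hT : 3 * x / (2 * x ^ 2 - 12) ≤ S / C := by
    rw [div_le_div_iff₀ (by linarith) hCp]
    exact hq
  have hf : (2 * x ^ 2 - 12) / (x ^ 2 - 4) ≤ 1 + 2 * l / (x ^ 2 - 4) := by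
    rw [one_add_div h4.ne']
    exact div_le_div_of_nonneg_right (by linarith) h4.le
  have hm : 3 * x / (x ^ 2 - 4) ≤ S / C * (1 + 2 * l / (x ^ 2 - 4)) := by
    refine le_trans (le_of_eq ?_) (mul_le_mul hT hf
      (div_nonneg (by linarith) h4.le) (le_trans (div_nonneg (by linarith) (by linarith)) hT))
    rw [div_mul_div_cancel₀ (by linarith)]
  have e : -x / 2 + l * x / (x ^ 2 - 4) + 2 * x / (x ^ 2 - 4)
      = x * (2 * l + 8 - x ^ 2) / (2 * (x ^ 2 - 4)) := by
    field_simp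
    ring
  have : 0 ≤ x * (2 * l + 8 - x ^ 2) / (2 * (x ^ 2 - 4)) :=
    div_nonneg (mul_nonneg (by linarith) (by linarith)) (by linarith)
  have e2 : 3 * x / (x ^ 2 - 4) = x / (x ^ 2 - 4) + 2 * x / (x ^ 2 - 4) := by ring
  linarith

theorem algebraic_part_neg (l : ℝ) (hl : 6 < l) :
    (log (l + 3) - log (l + 1)) / 2 - 1 + l / 2 * (log (l + 1) - log (l - 1))
      + (log (l - 1) - log l) < 0 := by
  have h1 := log_sub_log_le 1 (l + 2) one_pos (by linarith)
  have h2 := log_sub_log_le 1 l one_pos (by linarith)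
  have h3 : log (l - 1) - log l ≤ -(1 / l) := by
    rw [← log_div (by linarith) (by linarith)]
    refine (log_le_sub_one_of_pos (div_pos (by linarith) (by linarith))).trans (le_of_eq ?_)
    field_simp
    ring
  rw [show l + 2 + 1 = l + 3 by ring, show l + 2 - 1 = l + 1 by ring] at h1
  have h2' := mul_le_mul_of_nonneg_left h2 (show 0 ≤ l / 2 by linarith)
  have key : (1 / (l + 2) + 1 ^ 3 / (3 * (l + 2) * ((l + 2) ^ 2 - 1 ^ 2))) - 1
      + l / 2 * (2 * (1 / l + 1 ^ 3 / (3 * l * (l ^ 2 - 1 ^ 2)))) - 1 / l < 0 := by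
    obtain ⟨k, hk, rfl⟩ : ∃ k : ℝ, 0 < k ∧ l = k + 6 := ⟨l - 6, by linarith, by ring⟩
    have p1 : (k + 6 + 2) ^ 2 - 1 ^ 2 = (k + 7) * (k + 9) := by ring
    have p2 : (k + 6) ^ 2 - 1 ^ 2 = (k + 5) * (k + 7) := by ring
    rw [p1, p2]
    have e : (1 / (k + 6 + 2) + 1 ^ 3 / (3 * (k + 6 + 2) * ((k + 7) * (k + 9)))) - 1
      + (k + 6) / 2 * (2 * (1 / (k + 6) + 1 ^ 3 / (3 * (k + 6) * ((k + 5) * (k + 7)))))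
      - 1 / (k + 6) = - (6 * (k + 5) * (k + 7) * (k + 9) - (k + 5) * (k + 6)
        - (k + 6) * (k + 8) * (k + 9)) / (3 * (k + 5) * (k + 6) * (k + 7) * (k + 8) * (k + 9)) := by
      have : k + 6 + 2 = k + 8 := by ring
      rw [this]
      field_simp
      ring
    rw [e]
    apply div_neg_of_neg_of_pos
    · nlinarith [pow_pos hk 2, pow_pos hk 3]
    · positivity
  linarith

/-- The pointwise inequality
`(2 r_{λ+4} - t) H_λ(r_{λ+4} - t) < 2λ (2 r_{λ+2} + t) H_{λ-2}(r_{λ+2} + t)`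
for `λ > λ₀ = (28 + 11√7)/9` and `0 ≤ t < r_{λ+4} - r_{λ+3}`,
where `r_μ = √(2(μ-1))`, `h_l(s) = e^{-s²/4} s^l` and
`H_l(s) = h_l(s-2) + h_l(s+2)`. -/
theorem pointwise_inequality (lam : ℝ) (hlam : (28 + 11 * Real.sqrt 7) / 9 < lam)
    (H : ℝ → ℝ → ℝ)
    (hH : ∀ l s : ℝ, H l s
        = exp (-(s - 2) ^ 2 / 4) * (s - 2) ^ l + exp (-(s + 2) ^ 2 / 4) * (s + 2) ^ l)
    (t : ℝ) (ht0 : 0 ≤ t)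
    (ht : t < Real.sqrt (2 * (lam + 3)) - Real.sqrt (2 * (lam + 2))) :
    (2 * Real.sqrt (2 * (lam + 3)) - t) * H lam (Real.sqrt (2 * (lam + 3)) - t)
      < 2 * lam * (2 * Real.sqrt (2 * (lam + 1)) + t)
          * H (lam - 2) (Real.sqrt (2 * (lam + 1)) + t) := by
  have hl : 6 < lam := by
    have : (2.6 : ℝ) < Real.sqrt 7 := Real.lt_sqrt_of_sq_lt (by norm_num)
    linarith
  have ha2 : Real.sqrt (2 * (lam + 3)) ^ 2 = 2 * (lam + 3) := sq_sqrt (by linarith)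
  have hb2 : Real.sqrt (2 * (lam + 1)) ^ 2 = 2 * (lam + 1) := sq_sqrt (by linarith)
  have hm2 : Real.sqrt (2 * (lam + 2)) ^ 2 = 2 * (lam + 2) := sq_sqrt (by linarith)
  have hb : 2 < Real.sqrt (2 * (lam + 1)) := Real.lt_sqrt_of_sq_lt (by linarith)
  have hbm : Real.sqrt (2 * (lam + 1)) < Real.sqrt (2 * (lam + 2)) :=
    sqrt_lt_sqrt (by linarith) (by linarith)
  have hma : Real.sqrt (2 * (lam + 2)) < Real.sqrt (2 * (lam + 3)) :=
    sqrt_lt_sqrt (by linarith) (by linarith)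
  set a := Real.sqrt (2 * (lam + 3))
  set b := Real.sqrt (2 * (lam + 1))
  set m := Real.sqrt (2 * (lam + 2))
  have hconc : a + b ≤ 2 * m := by nlinarith [sq_nonneg (a - b)]
  have hderiv : ∀ x, 0 ≤ x → x ≤ t → HasDerivAt
      (fun x => log (2 * a - x) + logSum lam (a - x)
        - (log (2 * b + x) + logSum (lam - 2) (b + x))) _ x := fun x h0 h1 =>
    ((((hasDerivAt_id x).const_sub (2 * a)).log (by simp; linarith)).add
      ((hasDerivAt_logSum lam (a - x) (by linarith)).comp x
        ((hasDerivAt_id x).const_sub a))).sub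
    ((((hasDerivAt_id x).const_add (2 * b)).log (by simp; linarith)).add
      ((hasDerivAt_logSum (lam - 2) (b + x) (by linarith)).comp x
        ((hasDerivAt_id x).const_add b)))
  have hanti := antitoneOn_of_deriv_nonpos (convex_Icc 0 t)
    (fun x hx => (hderiv x hx.1 hx.2).continuousAt.continuousWithinAt)
    (fun x hx => by
      rw [interior_Icc] at hx
      exact (hderiv x hx.1.le hx.2.le).differentiableAt.differentiableWithinAt)
    (fun x hx => by
      rw [interior_Icc] at hx
      obtain ⟨hx0, hxt⟩ := hx
      rw [(hderiv x hx0.le hxt.le).deriv]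
      have k1 := deriv_logSum_lower lam (a - x) (by linarith) (by nlinarith) (by nlinarith)
        (by linarith)
      have k2 := deriv_logSum_lower' (lam - 2) (b + x) (by linarith) (by nlinarith)
        (by nlinarith) (by linarith)
      have k3 : (a - x) / ((a - x) ^ 2 - 4) ≤ (b + x) / ((b + x) ^ 2 - 4) := by
        have hu : 2 < b + x := by linarith
        have hs : b + x ≤ a - x := by linarith
        generalize b + x = u at hu hs
        generalize a - x = s at hs
        rw [div_le_div_iff₀ (by nlinarith) (by nlinarith)]
        nlinarith [mul_nonneg (sub_nonneg.2 hs) (show 0 ≤ s * u + 4 by nlinarith)]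
      have k4 : 0 ≤ 1 / (2 * a - x) := div_nonneg zero_le_one (by linarith)
      have k5 : 0 ≤ 1 / (2 * b + x) := div_nonneg zero_le_one (by linarith)
      simp only [id, neg_div] at *
      linarith)
  have h0t := hanti (Set.left_mem_Icc.2 ht0) (Set.right_mem_Icc.2 ht0) ht0
  simp only [sub_zero, add_zero] at h0t
  have hphase : phase lam a < phase (lam - 2) b := by
    have := phase_critical_lt a b hb (hbm.trans hma)
    rwa [ha2, hb2, show 2 * (lam + 3) / 2 - 3 = lam by ring,
      show 2 * (lam + 1) / 2 - 3 = lam - 2 by ring] at this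
  have hphase0 : 0 ≤ phase lam a :=
    le_trans (div_nonneg (by norm_num) (by linarith))
      (le_phase 2 lam a (by linarith) le_rfl (by linarith) (by linarith))
  have hcosh : log (cosh (phase lam a)) < log (cosh (phase (lam - 2) b)) := by
    apply log_lt_log (cosh_pos _)
    rw [cosh_lt_cosh, abs_of_nonneg hphase0, abs_of_nonneg (hphase0.trans hphase.le)]
    exact hphase
  have hzero : log (2 * a) + logSum lam a - (log (2 * b) + logSum (lam - 2) b)
      < log (2 * lam) := by
    have hA := algebraic_part_neg lam hl
    have la : log (a - 2) + log (a + 2) = log 2 + log (lam + 1) := by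
      rw [← log_mul (by linarith) (by linarith), ← log_mul (by norm_num) (by linarith)]
      congr 1
      linarith
    have lb : log (b - 2) + log (b + 2) = log 2 + log (lam - 1) := by
      rw [← log_mul (by linarith) (by linarith), ← log_mul (by norm_num) (by linarith)]
      congr 1
      linarith
    have la' : log a = (log 2 + log (lam + 3)) / 2 := by
      rw [← log_mul (by norm_num) (by linarith), ← ha2, log_pow]
      push_cast
      ring
    have lb' : log b = (log 2 + log (lam + 1)) / 2 := by
      rw [← log_mul (by norm_num) (by linarith), ← hb2, log_pow]
      push_cast
      ring
    rw [logSum, logSum, la, lb, log_mul (by norm_num) (by linarith),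
      log_mul (by norm_num) (by linarith), log_mul (by norm_num) (by linarith), la', lb',
      neg_div, neg_div, ha2, hb2]
    linarith
  have hpa : 0 < 2 * a - t := by linarith
  have hpb : 0 < 2 * b + t := by linarith
  have hfin : log (2 * a - t) + logSum lam (a - t)
      < log (2 * lam) + log (2 * b + t) + logSum (lam - 2) (b + t) := by linarith
  have hexp := exp_lt_exp.2 hfin
  rw [exp_add, exp_add, exp_add, exp_log hpa, exp_log hpb, exp_log (by linarith)] at hexp
  rw [hH, hH, sum_eq_exp_logSum lam (a - t) (by linarith),
    sum_eq_exp_logSum (lam - 2) (b + t) (by linarith)]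
  have := mul_lt_mul_of_pos_left hexp (show 0 < 2 * exp (-1) by positivity)
  linarith
end

section
/- Let λ > 1, r_λ = √(2(λ−1)), and 0 < ε₀ < r_λ < R₀. Let f : [ε₀, R₀] → ℝ be a positive solution of f''/(1 + (f')²) = (r/2 − (λ−1)/r) f' − f/2 such that ∫_{ε₀}^{R₀} f(r)(1 + (λ−1)/r²) dr ≤ π. Then f(r) ≤ max( f(ε₀), 2π/(r_λ − ε₀) ) for all r ∈ [ε₀, r_λ], and f(r) ≤ max( f(R₀), 2π/(R₀ − r_λ) ) for all r ∈ [r_λ, R₀]. -/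
open Real MeasureTheory
open Filter Topology Set

/-- The right-hand side `(r/2 - k/r) f' - f/2` of the graphical geodesic equation. -/
noncomputable def geodesicRHS (k : ℝ) (f : ℝ → ℝ) (r : ℝ) : ℝ :=
  (r / 2 - k / r) * deriv f r - f r / 2

/-- `f` is a positive solution of the graphical geodesic equation on `[p, q]`, an interval
which avoids the origin (negative intervals are allowed, the equation being even in `r`). -/
structure IsGeodesicOn (k p q : ℝ) (f : ℝ → ℝ) : Prop where
  ne_zero : ∀ r ∈ Icc p q, r ≠ 0
  pos : ∀ r ∈ Icc p q, 0 < f r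
  eqn : ∀ r ∈ Icc p q, deriv (deriv f) r = (1 + deriv f r ^ 2) * geodesicRHS k f r

namespace IsGeodesicOn

variable {k p q : ℝ} {f : ℝ → ℝ}

theorem mono (h : IsGeodesicOn k p q f) {p' q' : ℝ} (hp : p ≤ p') (hq : q' ≤ q) :
    IsGeodesicOn k p' q' f :=
  have hs : Icc p' q' ⊆ Icc p q := Icc_subset_Icc hp hq
  ⟨fun r hr => h.ne_zero r (hs hr), fun r hr => h.pos r (hs hr), fun r hr => h.eqn r (hs hr)⟩

theorem comp_neg (h : IsGeodesicOn k p q f) : IsGeodesicOn k (-q) (-p) (fun r => f (-r)) := by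
  have hs : ∀ r ∈ Icc (-q) (-p), -r ∈ Icc p q := fun r hr => ⟨by linarith [hr.2], by linarith [hr.1]⟩
  have hd : deriv (fun r => f (-r)) = fun r => -deriv f (-r) := funext fun r => deriv_comp_neg f r
  refine ⟨fun r hr => neg_ne_zero.1 (h.ne_zero _ (hs r hr)), fun r hr => h.pos _ (hs r hr),
    fun r hr => ?_⟩
  have hdd : deriv (deriv fun r => f (-r)) r = deriv (deriv f) (-r) := by
    rw [hd, deriv.fun_neg, deriv_comp_neg, neg_neg]
  rw [hdd, h.eqn _ (hs r hr)]
  simp only [geodesicRHS, hd, div_neg]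
  ring

theorem deriv_deriv_neg (h : IsGeodesicOn k p q f) {r : ℝ} (hr : r ∈ Icc p q)
    (hu : geodesicRHS k f r < 0) : deriv (deriv f) r < 0 := by
  rw [h.eqn r hr]
  exact mul_neg_of_pos_of_neg (by positivity) hu

theorem differentiableAt_deriv (h : IsGeodesicOn k p q f) {r : ℝ} (hr : r ∈ Icc p q)
    (hu : geodesicRHS k f r ≠ 0) : DifferentiableAt ℝ (deriv f) r := by
  apply differentiableAt_of_deriv_ne_zero
  rw [h.eqn r hr]
  exact mul_ne_zero (by positivity) hu

theorem hasDerivAt_deriv_of_deriv_eq_zero (h : IsGeodesicOn k p q f) {r : ℝ} (hr : r ∈ Icc p q)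
    (h0 : deriv f r = 0) : HasDerivAt (deriv f) (-(f r / 2)) r := by
  have hu : geodesicRHS k f r = -(f r / 2) := by simp [geodesicRHS, h0]
  have := (h.differentiableAt_deriv hr (by rw [hu]; linarith [h.pos r hr])).hasDerivAt
  rwa [h.eqn r hr, h0, hu, zero_pow two_ne_zero, add_zero, one_mul] at this

/-- To the right of a zero of `deriv f`, the derivative is negative. -/
theorem eventually_deriv_neg (h : IsGeodesicOn k p q f) {x : ℝ} (hx : x ∈ Icc p q)
    (h0 : deriv f x = 0) : ∀ᶠ r in 𝓝[>] x, deriv f r < 0 := by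
  have hs := (hasDerivWithinAt_iff_tendsto_slope' (s := Ioi x) (by simp)).1
    (h.hasDerivAt_deriv_of_deriv_eq_zero hx h0).hasDerivWithinAt
  filter_upwards [hs.eventually_lt_const (u := 0) (by linarith [h.pos x hx]), self_mem_nhdsWithin]
    with r hr hxr
  rw [slope_def_field, h0, sub_zero] at hr
  by_contra! hc
  exact absurd hr (not_lt.2 (div_nonneg hc (sub_nonneg.2 (le_of_lt hxr))))

theorem hasDerivWithinAt_Ici_of_deriv_eq_zero (h : IsGeodesicOn k p q f) {x : ℝ}
    (hx : x ∈ Ico p q) (h0 : deriv f x = 0) : HasDerivWithinAt f 0 (Ici x) x := by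
  have hxI : x ∈ Icc p q := Ico_subset_Icc_self hx
  have hd := h.hasDerivAt_deriv_of_deriv_eq_zero hxI h0
  have hlim0 : Tendsto (deriv f) (𝓝[>] x) (𝓝 0) :=
    h0 ▸ hd.continuousAt.tendsto.mono_left nhdsWithin_le_nhds
  obtain ⟨y, hxy, hy⟩ := mem_nhdsGT_iff_exists_Ioo_subset.1
    (((h.eventually_deriv_neg hxI h0).and (hlim0.eventually_const_lt (u := -1) (by norm_num))).and
      (Ioo_mem_nhdsGT hx.2))
  replace hxy : x < y := hxy
  have hmem : ∀ r ∈ Ioo x y, r ∈ Icc p q := fun r hr => ⟨hx.1.trans hr.1.le, (hy hr).2.2.le⟩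
  have hdiff : DifferentiableOn ℝ f (Ioo x y) := fun r hr =>
    (differentiableAt_of_deriv_ne_zero (hy hr).1.1.ne).differentiableWithinAt
  have hanti : AntitoneOn f (Ioo x y) := by
    apply antitoneOn_of_deriv_nonpos (convex_Ioo x y) hdiff.continuousOn <;> rw [interior_Ioo]
    exacts [hdiff, fun r hr => (hy hr).1.1.le]
  have hmono : MonotoneOn (fun r => f r + r) (Ioo x y) := by
    have hdiff' : DifferentiableOn ℝ (fun r => f r + r) (Ioo x y) := hdiff.add differentiableOn_id
    apply monotoneOn_of_deriv_nonneg (convex_Ioo x y) hdiff'.continuousOn <;> rw [interior_Ioo]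
    · exact hdiff'
    · intro r hr
      have := ((differentiableAt_of_deriv_ne_zero (hy hr).1.1.ne).hasDerivAt.add
        (hasDerivAt_id r)).deriv
      have h2 := (hy hr).1.2
      change 0 ≤ deriv (f + id) r
      rw [this]; linarith
  obtain ⟨z, hz⟩ : (Ioo x y).Nonempty := nonempty_Ioo.2 hxy
  have hbdd : BddAbove (f '' Ioo x y) := by
    refine ⟨f z + (z - x), ?_⟩
    rintro _ ⟨r, hr, rfl⟩
    rcases le_total r z with hrz | hrz
    · have := hmono hr hz hrz
      dsimp only at this
      linarith [hr.1]
    · linarith [hanti hz hr hrz, hz.1]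
  have hlim := hanti.tendsto_nhdsWithin_Ioo_right ⟨z, hz⟩ hbdd
  set l := sSup (f '' Ioo x y)
  have hl : 0 < l := (h.pos z (hmem z hz)).trans_le (le_csSup hbdd ⟨z, hz, rfl⟩)
  have hu : Tendsto (geodesicRHS k f) (𝓝[>] x) (𝓝 (-(l / 2))) := by
    have hc : ContinuousAt (fun r => r / 2 - k / r) x := by
      have := h.ne_zero x hxI
      fun_prop (disch := assumption)
    have := ((hc.tendsto.mono_left nhdsWithin_le_nhds).mul hlim0).sub (hlim.div_const 2)
    rw [mul_zero, zero_sub] at this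
    exact this
  obtain ⟨w, hxw, hw⟩ := mem_nhdsGT_iff_exists_Ioo_subset.1
    ((hu.eventually_lt_const (u := 0) (by linarith)).and (Ioo_mem_nhdsGT hxy))
  have hdd : HasDerivWithinAt (deriv f) (-(l / 2)) (Ici x) x := by
    refine hasDerivWithinAt_Ici_of_tendsto_deriv (s := Ioo x w)
      (fun r hr => (h.differentiableAt_deriv (hmem r (hw hr).2)
        (hw hr).1.ne).differentiableWithinAt)
      hd.continuousAt.continuousWithinAt (Ioo_mem_nhdsGT hxw) ?_
    have : Tendsto (fun r => (1 + deriv f r ^ 2) * geodesicRHS k f r) (𝓝[>] x)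
        (𝓝 (-(l / 2))) := by
      simpa using ((hlim0.pow 2).const_add 1).mul hu
    refine this.congr' ?_
    filter_upwards [Ioo_mem_nhdsGT hxy] with r hr using (h.eqn r (hmem r hr)).symm
  have hlx : l = f x := by
    have := (uniqueDiffWithinAt_Ici x).eq_deriv _ hdd hd.hasDerivWithinAt
    linarith
  refine hasDerivWithinAt_Ici_of_tendsto_deriv hdiff ?_ (Ioo_mem_nhdsGT hxy) hlim0
  rw [hlx] at hlim
  exact hlim.mono_left (nhdsWithin_mono x Ioo_subset_Ioi_self)

theorem hasDerivWithinAt_Ici (h : IsGeodesicOn k p q f) {x : ℝ} (hx : x ∈ Ico p q) :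
    HasDerivWithinAt f (deriv f x) (Ici x) x := by
  by_cases h0 : deriv f x = 0
  · rw [h0]
    exact h.hasDerivWithinAt_Ici_of_deriv_eq_zero hx h0
  · exact (differentiableAt_of_deriv_ne_zero h0).hasDerivAt.hasDerivWithinAt

theorem hasDerivWithinAt_Iic (h : IsGeodesicOn k p q f) {x : ℝ} (hx : x ∈ Ioc p q) :
    HasDerivWithinAt f (deriv f x) (Iic x) x := by
  have key := h.comp_neg.hasDerivWithinAt_Ici (x := -x)
    ⟨by linarith [hx.2], by linarith [hx.1]⟩
  rw [deriv_comp_neg, neg_neg] at key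
  have := HasDerivWithinAt.scomp (s := Iic x) (h := fun r : ℝ => -r) x key
    (hasDerivAt_neg x).hasDerivWithinAt (fun r hr => neg_le_neg (mem_Iic.1 hr))
  simpa [Function.comp_def] using this

theorem hasDerivAt (h : IsGeodesicOn k p q f) {x : ℝ} (hx : x ∈ Ioo p q) :
    HasDerivAt f (deriv f x) x := by
  have := (h.hasDerivWithinAt_Iic (Ioo_subset_Ioc_self hx)).union
    (h.hasDerivWithinAt_Ici (Ioo_subset_Ico_self hx))
  rwa [Iic_union_Ici, hasDerivWithinAt_univ] at this

theorem continuousOn (h : IsGeodesicOn k p q f) : ContinuousOn f (Icc p q) := by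
  intro x hx
  rcases hx.1.eq_or_lt with rfl | hpx
  · rcases hx.2.eq_or_lt with rfl | hxq
    · simp
    · exact (h.hasDerivWithinAt_Ici ⟨le_rfl, hxq⟩).continuousWithinAt.mono Icc_subset_Ici_self
  · rcases hx.2.eq_or_lt with rfl | hxq
    · exact (h.hasDerivWithinAt_Iic ⟨hpx, le_rfl⟩).continuousWithinAt.mono Icc_subset_Iic_self
    · exact (h.hasDerivAt ⟨hpx, hxq⟩).continuousAt.continuousWithinAt

theorem differentiableOn (h : IsGeodesicOn k p q f) : DifferentiableOn ℝ f (Ioo p q) :=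
  fun _ hx => (h.hasDerivAt hx).differentiableAt.differentiableWithinAt

theorem not_isLocalMin (h : IsGeodesicOn k p q f) {x : ℝ} (hx : x ∈ Ioo p q) :
    ¬ IsLocalMin f x := by
  intro hmin
  have hxI := Ioo_subset_Icc_self hx
  obtain ⟨y, hxy, hy⟩ := mem_nhdsGT_iff_exists_Ioo_subset.1
    (((h.eventually_deriv_neg hxI hmin.deriv_eq_zero).and
      (hmin.filter_mono nhdsWithin_le_nhds)).and (Ioo_mem_nhdsGT hx.2))
  obtain ⟨z, hz⟩ : (Ioo x y).Nonempty := nonempty_Ioo.2 hxy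
  have hzq : z < q := (hy hz).2.2
  obtain ⟨c, hc, hcz⟩ := exists_deriv_eq_slope f hz.1
    (h.continuousOn.mono (Icc_subset_Icc hx.1.le hzq.le))
    (h.differentiableOn.mono (Ioo_subset_Ioo hx.1.le hzq.le))
  have h1 : deriv f c < 0 := (hy ⟨hc.1, hc.2.trans hz.2⟩).1.1
  have h2 : f x ≤ f z := (hy hz).1.2
  rw [hcz] at h1
  exact absurd h1 (not_lt.2 (div_nonneg (sub_nonneg.2 h2) (sub_nonneg.2 hz.1.le)))

theorem hasDerivAt_geodesicRHS (h : IsGeodesicOn k p q f) {r : ℝ} (hr : r ∈ Ioo p q)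
    (hu : geodesicRHS k f r ≠ 0) :
    HasDerivAt (geodesicRHS k f)
      (k / r ^ 2 * deriv f r
        + (r / 2 - k / r) * ((1 + deriv f r ^ 2) * geodesicRHS k f r)) r := by
  have hrI := Ioo_subset_Icc_self hr
  have h0 := h.ne_zero r hrI
  have hdd := (h.differentiableAt_deriv hrI hu).hasDerivAt
  rw [h.eqn r hrI] at hdd
  have ha : HasDerivAt (fun r => r / 2 - k / r) (1 / 2 + k / r ^ 2) r := by
    refine (((hasDerivAt_id' r).div_const 2).sub
      ((hasDerivAt_const r k).div (hasDerivAt_id' r) h0)).congr_deriv ?_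
    ring
  refine ((ha.mul hdd).sub ((h.hasDerivAt hr).div_const 2)).congr_deriv ?_
  ring

/-- If `f` is strictly concave just to the left of `c`, then `deriv f` is left continuous
at `c`. -/
theorem tendsto_deriv_of_rhs_neg (h : IsGeodesicOn k p q f) {s c : ℝ} (hs : p < s) (hsc : s < c)
    (hc : c < q) (hu : ∀ r ∈ Ico s c, geodesicRHS k f r < 0) :
    Tendsto (deriv f) (𝓝[<] c) (𝓝 (deriv f c)) := by
  have hI : ∀ r ∈ Ico s c, r ∈ Ioo p q := fun r hr => ⟨hs.trans_le hr.1, hr.2.trans hc⟩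
  have hanti : StrictAntiOn (deriv f) (Ico s c) := by
    refine strictAntiOn_of_deriv_neg (convex_Ico s c) (fun r hr =>
      (h.differentiableAt_deriv (Ioo_subset_Icc_self (hI r hr))
        (hu r hr).ne).continuousAt.continuousWithinAt) fun r hr => ?_
    rw [interior_Ico] at hr
    have hr' := Ioo_subset_Ico_self hr
    exact h.deriv_deriv_neg (Ioo_subset_Icc_self (hI r hr')) (hu r hr')
  have hmvt : ∀ r ∈ Ico s c, ∃ ξ ∈ Ioo r c, deriv f ξ = slope f c r := by
    intro r hr
    obtain ⟨ξ, hξ, he⟩ := exists_deriv_eq_slope f hr.2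
      (h.continuousOn.mono (Icc_subset_Icc (hI r hr).1.le hc.le))
      (h.differentiableOn.mono (Ioo_subset_Ioo (hI r hr).1.le hc.le))
    exact ⟨ξ, hξ, by rw [he, slope_comm, slope_def_field]⟩
  have hslope := (hasDerivWithinAt_iff_tendsto_slope' (s := Iio c) (by simp)).1
    (h.hasDerivAt ⟨hs.trans hsc, hc⟩).hasDerivWithinAt
  have hIco : Ico s c ∈ 𝓝[<] c := Ico_mem_nhdsLT hsc
  rw [tendsto_order]
  constructor
  · intro b hb
    filter_upwards [hslope.eventually_const_lt hb, hIco] with r hr hrs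
    obtain ⟨ξ, hξ, he⟩ := hmvt r hrs
    exact (he ▸ hr).trans (hanti hrs ⟨hrs.1.trans hξ.1.le, hξ.2⟩ hξ.1)
  · intro b hb
    obtain ⟨r, hr, hrs⟩ := ((hslope.eventually_lt_const hb).and hIco).exists
    obtain ⟨ξ, hξ, he⟩ := hmvt r hrs
    have hξs : ξ ∈ Ico s c := ⟨hrs.1.trans hξ.1.le, hξ.2⟩
    filter_upwards [Ico_mem_nhdsLT hξ.2] with t ht
    exact (hanti.antitoneOn hξs ⟨hξs.1.trans ht.1, ht.2⟩ ht.1).trans_lt (he ▸ hr)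

/-- Negativity of `f''` propagates to the right as long as `r/2 - k/r ≤ 0`. -/
theorem rhs_neg_of_rhs_neg (h : IsGeodesicOn k p q f) (hk : 0 < k)
    (ha : ∀ r ∈ Ioo p q, r / 2 - k / r ≤ 0) {s r : ℝ} (hs : p < s) (hsr : s ≤ r) (hr : r < q)
    (hus : geodesicRHS k f s < 0) : geodesicRHS k f r < 0 := by
  by_contra! hur
  set T : Set ℝ := {t ∈ Icc s r | 0 ≤ geodesicRHS k f t}
  have hrT : r ∈ T := ⟨⟨hsr, le_rfl⟩, hur⟩
  have hTb : BddBelow T := ⟨s, fun t ht => ht.1.1⟩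
  set c := sInf T
  have hsc : s ≤ c := le_csInf ⟨r, hrT⟩ fun t ht => ht.1.1
  have hcr : c ≤ r := csInf_le hTb hrT
  have hcI : c ∈ Ioo p q := ⟨hs.trans_le hsc, hcr.trans_lt hr⟩
  have hlt : ∀ t ∈ Ico s c, geodesicRHS k f t < 0 := fun t ht => by
    by_contra! hcon
    exact absurd (csInf_le hTb ⟨⟨ht.1, ht.2.le.trans hcr⟩, hcon⟩) (not_le.2 ht.2)
  have huc : geodesicRHS k f c = 0 := by
    by_contra hne
    have hcont := (h.hasDerivAt_geodesicRHS hcI hne).continuousAt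
    rcases lt_or_gt_of_ne hne with hneg | hpos
    · obtain ⟨t, ht, htT⟩ := mem_closure_iff_nhds.1 (csInf_mem_closure ⟨r, hrT⟩ hTb) _
        (hcont.eventually_lt_const hneg)
      exact absurd htT.2 (not_le.2 ht)
    · have hsc' : s < c := hsc.lt_of_ne (by rintro he; rw [← he] at hpos; linarith)
      obtain ⟨t, ht, hts⟩ := (((hcont.eventually_const_lt hpos).filter_mono
        nhdsWithin_le_nhds).and (Ico_mem_nhdsLT hsc')).exists
      exact absurd (hlt t hts) (not_lt.2 ht.le)
  have hsc' : s < c := hsc.lt_of_ne (by rintro he; rw [← he] at huc; linarith)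
  have hfc : 0 < f c := h.pos c (Ioo_subset_Icc_self hcI)
  have hc0 : c ≠ 0 := h.ne_zero c (Ioo_subset_Icc_self hcI)
  have hdc : deriv f c < 0 := by
    have h1 := ha c hcI
    unfold geodesicRHS at huc
    by_contra! hcon
    nlinarith
  have hlim := h.tendsto_deriv_of_rhs_neg hs hsc' hcI.2 hlt
  have hid : Tendsto (fun t : ℝ => t) (𝓝[<] c) (𝓝 c) := tendsto_id.mono_left nhdsWithin_le_nhds
  have hac : Tendsto (fun r => r / 2 - k / r) (𝓝[<] c) (𝓝 (c / 2 - k / c)) :=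
    (hid.div_const 2).sub (tendsto_const_nhds.div hid hc0)
  have hulim : Tendsto (geodesicRHS k f) (𝓝[<] c) (𝓝 0) := by
    rw [← huc]
    exact (hac.mul hlim).sub
      (((h.hasDerivAt hcI).continuousAt.tendsto.mono_left nhdsWithin_le_nhds).div_const 2)
  have hu'lim : Tendsto (fun r => k / r ^ 2 * deriv f r
        + (r / 2 - k / r) * ((1 + deriv f r ^ 2) * geodesicRHS k f r)) (𝓝[<] c)
        (𝓝 (k / c ^ 2 * deriv f c)) := by
    simpa using ((tendsto_const_nhds.div (hid.pow 2) (pow_ne_zero 2 hc0)).mul hlim).add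
      (hac.mul (((hlim.pow 2).const_add 1).mul hulim))
  have hneg : k / c ^ 2 * deriv f c < 0 := mul_neg_of_pos_of_neg (by positivity) hdc
  obtain ⟨d, hdc', hd⟩ := mem_nhdsLT_iff_exists_Ico_subset.1
    ((hu'lim.eventually_lt_const hneg).and (Ico_mem_nhdsLT hsc'))
  replace hdc' : d < c := hdc'
  have hII : ∀ t ∈ Ico d c, t ∈ Ioo p q := fun t ht =>
    ⟨hs.trans_le (hd ht).2.1, ht.2.trans hcI.2⟩
  have hder : ∀ t ∈ Ico d c, HasDerivAt (geodesicRHS k f) _ t := fun t ht =>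
    h.hasDerivAt_geodesicRHS (hII t ht) (hlt t (hd ht).2).ne
  have hstrict : StrictAntiOn (geodesicRHS k f) (Icc d c) := by
    refine strictAntiOn_of_deriv_neg (convex_Icc d c) (fun t ht => ?_) fun t ht => ?_
    · rcases ht.2.eq_or_lt with rfl | htc
      · refine ContinuousWithinAt.mono ?_ Icc_subset_Iic_self
        rw [← continuousWithinAt_Iio_iff_Iic]
        simpa only [ContinuousWithinAt, huc] using hulim
      · exact (hder t ⟨ht.1, htc⟩).continuousAt.continuousWithinAt
    · rw [interior_Icc] at ht
      rw [(hder t (Ioo_subset_Ico_self ht)).deriv]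
      exact (hd (Ioo_subset_Ico_self ht)).1
  have h1 := hstrict (left_mem_Icc.2 hdc'.le) (right_mem_Icc.2 hdc'.le) hdc'
  have h2 := hlt d (hd ⟨le_rfl, hdc'⟩).2
  linarith

theorem exists_deriv_pos (h : IsGeodesicOn k p q f) {m r : ℝ} (hm : m ∈ Ioc p q)
    (hpm : f p < f m) (hr : r ∈ Ioo p q) : ∃ s ∈ Ioo p r, 0 < deriv f s := by
  suffices hex : ∃ t ∈ Ioc p r, f p < f t by
    obtain ⟨t, ht, hpt⟩ := hex
    have htq : t ≤ q := ht.2.trans hr.2.le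
    obtain ⟨s, hs, hst⟩ := exists_deriv_eq_slope f ht.1
      (h.continuousOn.mono (Icc_subset_Icc_right htq))
      (h.differentiableOn.mono (Ioo_subset_Ioo_right htq))
    exact ⟨s, ⟨hs.1, hs.2.trans_le ht.2⟩,
      hst ▸ div_pos (sub_pos.2 hpt) (sub_pos.2 ht.1)⟩
  rcases le_or_gt m r with hmr | hrm
  · exact ⟨m, ⟨hm.1, hmr⟩, hpm⟩
  by_contra! hcon
  have hrp : f r ≤ f p := hcon r ⟨hr.1, le_rfl⟩
  obtain ⟨x, hx, hmin⟩ := isCompact_Icc.exists_isMinOn (nonempty_Icc.2 hm.1.le)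
    (h.continuousOn.mono (Icc_subset_Icc_right hm.2))
  rw [isMinOn_iff] at hmin
  have hrI : r ∈ Icc p m := ⟨hr.1.le, hrm.le⟩
  obtain ⟨y, hy, hyx⟩ : ∃ y ∈ Ioo p m, f y = f x := by
    rcases hx.1.eq_or_lt with rfl | hpx
    · exact ⟨r, ⟨hr.1, hrm⟩, hrp.antisymm (hmin r hrI)⟩
    · refine ⟨x, ⟨hpx, hx.2.lt_of_ne ?_⟩, rfl⟩
      rintro rfl
      linarith [hmin r hrI]
  refine h.not_isLocalMin ⟨hy.1, hy.2.trans_le hm.2⟩ ?_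
  filter_upwards [Icc_mem_nhds hy.1 hy.2] with t ht
  exact hyx ▸ hmin t ht

theorem concaveOn (h : IsGeodesicOn k p q f) (hk : 0 < k)
    (ha : ∀ r ∈ Ioo p q, r / 2 - k / r ≤ 0) {m : ℝ} (hm : m ∈ Ioc p q) (hpm : f p < f m) :
    ConcaveOn ℝ (Icc p q) f := by
  have hu : ∀ r ∈ Ioo p q, geodesicRHS k f r < 0 := by
    intro r hr
    obtain ⟨s, hs, hds⟩ := h.exists_deriv_pos hm hpm hr
    have hsI : s ∈ Ioo p q := ⟨hs.1, hs.2.trans hr.2⟩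
    refine h.rhs_neg_of_rhs_neg hk ha hs.1 hs.2.le hr.2 ?_
    have h1 := mul_nonpos_of_nonpos_of_nonneg (ha s hsI) hds.le
    have h2 := h.pos s (Ioo_subset_Icc_self hsI)
    unfold geodesicRHS
    linarith
  apply concaveOn_of_deriv2_nonpos (convex_Icc p q) h.continuousOn <;> rw [interior_Icc]
  · exact h.differentiableOn
  · exact fun r hr => (h.differentiableAt_deriv (Ioo_subset_Icc_self hr)
      (hu r hr).ne).differentiableWithinAt
  · exact fun r hr => (h.deriv_deriv_neg (Ioo_subset_Icc_self hr) (hu r hr)).le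

end IsGeodesicOn

/-- The left half of the Hermite–Hadamard inequality for concave functions. -/
theorem ConcaveOn.mul_add_div_two_le_integral {a b : ℝ} {f : ℝ → ℝ}
    (hf : ConcaveOn ℝ (Icc a b) f) (hc : ContinuousOn f (Icc a b)) (hab : a ≤ b) :
    (b - a) * ((f a + f b) / 2) ≤ ∫ r in a..b, f r := by
  rcases hab.eq_or_lt with rfl | hlt
  · simp
  have hmem : ∀ r ∈ Icc a b, a + b - r ∈ Icc a b := fun r hr =>
    ⟨by linarith [hr.2], by linarith [hr.1]⟩
  have hchord : ∀ r ∈ Icc a b, (b - r) / (b - a) * f a + (r - a) / (b - a) * f b ≤ f r := by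
    intro r hr
    have hba : 0 < b - a := sub_pos.2 hlt
    have := hf.2 (left_mem_Icc.2 hab) (right_mem_Icc.2 hab)
      (div_nonneg (sub_nonneg.2 hr.2) hba.le) (div_nonneg (sub_nonneg.2 hr.1) hba.le)
      (by field_simp; ring)
    simp only [smul_eq_mul] at this
    have hr' : (b - r) / (b - a) * a + (r - a) / (b - a) * b = r := by
      field_simp
      ring
    rwa [hr'] at this
  have hi : IntervalIntegrable f volume a b := hc.intervalIntegrable_of_Icc hab
  have hi' : IntervalIntegrable (fun r => f (a + b - r)) volume a b :=
    (hc.comp (by fun_prop) hmem).intervalIntegrable_of_Icc hab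
  have hsymm : ∫ r in a..b, f (a + b - r) = ∫ r in a..b, f r := by
    rw [intervalIntegral.integral_comp_sub_left]
    simp
  have hle : ∫ _ in a..b, (f a + f b) ≤ ∫ r in a..b, (f r + f (a + b - r)) := by
    refine intervalIntegral.integral_mono_on hab (by simp) (hi.add hi') fun r hr => ?_
    have h1 := hchord r hr
    have h2 := hchord _ (hmem r hr)
    have hba : b - a ≠ 0 := (sub_pos.2 hlt).ne'
    have h3 : (b - r) / (b - a) * f a + (r - a) / (b - a) * f b
        + ((b - (a + b - r)) / (b - a) * f a + (a + b - r - a) / (b - a) * f b)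
        = f a + f b := by
      field_simp
      ring
    linarith
  rw [intervalIntegral.integral_const, smul_eq_mul, intervalIntegral.integral_add hi hi', hsymm]
    at hle
  linarith

/-- A nonnegative concave function lies above the triangle spanned by its graph. -/
theorem ConcaveOn.mul_div_two_le_integral {a b m : ℝ} {f : ℝ → ℝ}
    (hf : ConcaveOn ℝ (Icc a b) f) (hc : ContinuousOn f (Icc a b)) (hm : m ∈ Icc a b)
    (ha : 0 ≤ f a) (hb : 0 ≤ f b) : (b - a) * (f m / 2) ≤ ∫ r in a..b, f r := by
  have hs1 : Icc a m ⊆ Icc a b := Icc_subset_Icc_right hm.2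
  have hs2 : Icc m b ⊆ Icc a b := Icc_subset_Icc_left hm.1
  have h1 := (hf.subset hs1 (convex_Icc a m)).mul_add_div_two_le_integral (hc.mono hs1) hm.1
  have h2 := (hf.subset hs2 (convex_Icc m b)).mul_add_div_two_le_integral (hc.mono hs2) hm.2
  rw [← intervalIntegral.integral_add_adjacent_intervals
    ((hc.mono hs1).intervalIntegrable_of_Icc hm.1) ((hc.mono hs2).intervalIntegrable_of_Icc hm.2)]
  have h3 := mul_nonneg (sub_nonneg.2 hm.1) ha
  have h4 := mul_nonneg (sub_nonneg.2 hm.2) hb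
  linarith

/-- The one-sided a priori bound, in terms of the area under the graph. -/
theorem IsGeodesicOn.le_max {k p q A : ℝ} {f : ℝ → ℝ} (h : IsGeodesicOn k p q f) (hk : 0 < k)
    (hpq : p < q) (ha : ∀ r ∈ Ioo p q, r / 2 - k / r ≤ 0) (hA : ∫ r in p..q, f r ≤ A)
    {r : ℝ} (hr : r ∈ Icc p q) : f r ≤ max (f p) (2 * A / (q - p)) := by
  rw [le_max_iff, or_iff_not_imp_left, not_le]
  intro hlt
  have hpr : p < r := hr.1.lt_of_ne (by rintro rfl; exact lt_irrefl _ hlt)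
  have := (h.concaveOn hk ha ⟨hpr, hr.2⟩ hlt).mul_div_two_le_integral h.continuousOn hr
    (h.pos p (left_mem_Icc.2 hpq.le)).le (h.pos q (right_mem_Icc.2 hpq.le)).le
  rw [le_div_iff₀ (sub_pos.2 hpq)]
  linarith

/-- The area under the graph over a subinterval is at most the Gauss area. -/
theorem IsGeodesicOn.integral_le_gauss_area {k p q p' q' : ℝ} {f : ℝ → ℝ}
    (h : IsGeodesicOn k p q f) (hk : 0 < k) (hp : p ≤ p') (hpq : p' ≤ q') (hq : q' ≤ q) :
    ∫ r in p'..q', f r ≤ ∫ r in p..q, f r * (1 + k / r ^ 2) := by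
  have hcw : ContinuousOn (fun r => f r * (1 + k / r ^ 2)) (Icc p q) := by
    refine h.continuousOn.mul (continuousOn_const.add (continuousOn_const.div (by fun_prop) ?_))
    exact fun r hr => pow_ne_zero 2 (h.ne_zero r hr)
  have hpq' : p ≤ q := hp.trans (hpq.trans hq)
  calc ∫ r in p'..q', f r ≤ ∫ r in p..q, f r := by
        refine intervalIntegral.integral_mono_interval hp hpq hq ?_
          (h.continuousOn.intervalIntegrable_of_Icc hpq')
        filter_upwards [ae_restrict_mem measurableSet_Ioc] with r hr
        exact (h.pos r (Ioc_subset_Icc_self hr)).le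
    _ ≤ ∫ r in p..q, f r * (1 + k / r ^ 2) := by
        refine intervalIntegral.integral_mono_on hpq'
          (h.continuousOn.intervalIntegrable_of_Icc hpq')
          (hcw.intervalIntegrable_of_Icc hpq') fun r hr => ?_
        have := h.pos r hr
        exact le_mul_of_one_le_right this.le (le_add_of_nonneg_right (by positivity))

/-- A priori bounds for a positive solution of the graphical geodesic equation on
`[ε₀, R₀]` whose Gauss area under the graph is at most `π`. -/
theorem solution_bounds (lam : ℝ) (hlam : 1 < lam) (ε₀ R₀ : ℝ)
    (hε : 0 < ε₀) (h1 : ε₀ < Real.sqrt (2 * (lam - 1)))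
    (h2 : Real.sqrt (2 * (lam - 1)) < R₀)
    (f : ℝ → ℝ)
    (hpos : ∀ r ∈ Set.Icc ε₀ R₀, 0 < f r)
    (heq : ∀ r ∈ Set.Icc ε₀ R₀,
      deriv (deriv f) r / (1 + (deriv f r) ^ 2)
        = (r / 2 - (lam - 1) / r) * deriv f r - f r / 2)
    (harea : (∫ r in ε₀..R₀, f r * (1 + (lam - 1) / r ^ 2)) ≤ π) :
    (∀ r ∈ Set.Icc ε₀ (Real.sqrt (2 * (lam - 1))),
      f r ≤ max (f ε₀) (2 * π / (Real.sqrt (2 * (lam - 1)) - ε₀))) ∧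
    (∀ r ∈ Set.Icc (Real.sqrt (2 * (lam - 1))) R₀,
      f r ≤ max (f R₀) (2 * π / (R₀ - Real.sqrt (2 * (lam - 1))))) := by
  have hk : 0 < lam - 1 := by linarith
  set ρ := Real.sqrt (2 * (lam - 1))
  have hρsq : ρ ^ 2 = 2 * (lam - 1) := Real.sq_sqrt (by linarith)
  have h : IsGeodesicOn (lam - 1) ε₀ R₀ f := by
    refine ⟨fun r hr => (hε.trans_le hr.1).ne', hpos, fun r hr => ?_⟩
    have := heq r hr
    rw [div_eq_iff (by positivity)] at this
    rw [this, mul_comm]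
    rfl
  constructor
  · intro r hr
    refine (h.mono le_rfl h2.le).le_max hk h1 (fun t ht => ?_)
      ((h.integral_le_gauss_area hk le_rfl h1.le h2.le).trans harea) hr
    have ht0 : 0 < t := hε.trans ht.1
    rw [sub_nonpos, div_le_div_iff₀ two_pos ht0]
    nlinarith [ht.2]
  · intro r hr
    have hA : ∫ t in -R₀..-ρ, f (-t) ≤ π := by
      rw [intervalIntegral.integral_comp_neg, neg_neg, neg_neg]
      exact (h.integral_le_gauss_area hk h1.le h2.le le_rfl).trans harea
    have key := (h.mono h1.le le_rfl).comp_neg.le_max hk (neg_lt_neg h2) (fun t ht => ?_) hA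
      (r := -r) ⟨neg_le_neg hr.2, neg_le_neg hr.1⟩
    · simpa only [neg_neg, neg_sub_neg] using key
    · have hρt : ρ < -t := by linarith [ht.2]
      have ht0 : 0 < -t := (hε.trans h1).trans hρt
      have hle : (lam - 1) / (-t) ≤ -t / 2 := by
        rw [div_le_div_iff₀ ht0 two_pos]
        nlinarith [hε.trans h1]
      rw [div_neg] at hle
      linarith
end
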